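/- Let k be an algebraically closed field of characteristic 0 and n ≥ 3 an integer. Let G ⊂ GL_{n+1}(k) be the group of invertible matrices A whose first row is (α, 0, …, 0) with α ≠ 0, whose lower-left column is arbitrary, and whose lower-right n×n block B satisfies Bᵀ B = λ·I_n for some λ ∈ k ∖ {0}. Then the orbits of the induced action of G on ℙⁿ (projective space of lines in k^{n+1}, coordinates v₀, …, vₙ) are exactly the three sets: C = {[v] : v₀ = 0 and v₁² + ⋯ + vₙ² = 0}; the set {[v] : v₀ = 0} ∖ C; and the open set {[v] : v₀ ≠ 0}. -/

import Mathlib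

/-- Membership in the group `G = Aut(ℙⁿ; Q_{n−2})` of invertible matrices whose first row is
`(α, 0, …, 0)` with `α ≠ 0`, lower-left column arbitrary, and lower-right `n × n` block `B`
with `Bᵀ B = λ·I` for some `λ ≠ 0`. -/
def memG {k : Type*} [Field k] {n : ℕ} (A : Matrix (Fin (n + 1)) (Fin (n + 1)) k) : Prop :=
  IsUnit A ∧ A 0 0 ≠ 0 ∧ (∀ j : Fin (n + 1), j ≠ 0 → A 0 j = 0) ∧
    ∃ lam : k, lam ≠ 0 ∧
      (Matrix.of fun i j : Fin n => A i.succ j.succ).transpose *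
          (Matrix.of fun i j : Fin n => A i.succ j.succ) =
        lam • (1 : Matrix (Fin n) (Fin n) k)

/-- The orbit of a point of `ℙⁿ` under the induced action of the group `G`. -/
def GOrbit {k : Type*} [Field k] {n : ℕ} (p : Projectivization k (Fin (n + 1) → k)) :
    Set (Projectivization k (Fin (n + 1) → k)) :=
  {p' | ∃ A : Matrix (Fin (n + 1)) (Fin (n + 1)) k, memG A ∧
      ∃ hinj : Function.Injective A.mulVecLin,
        Projectivization.map A.mulVecLin hinj p = p'}

/-! Over a Pythagorean field of characteristic other than two (one in which every sum of squares is
a square), two nonzero vectors are related by a similitude of the dot product as soon as both or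
neither of them is isotropic. Indeed, the isometry group of a symmetric bilinear form is transitive
on the vectors of given square length outside the radical: the reflection in `x - y` exchanges `x`
and `y` if `x - y` is anisotropic, the reflection in `x + y` exchanges `x` and `-y` if `x + y` is
anisotropic, and if both are isotropic then so are `x` and `y`, and one passes through an isotropic
vector orthogonal to neither. Two anisotropic vectors have square lengths in the same square class,
so that rescaling makes these equal.

An element of `G` multiplies `v₀` by a nonzero scalar, and on the hyperplane `v₀ = 0` it acts as a
similitude on the remaining coordinates. Off this hyperplane the lower-left column moves those
coordinates freely, so only the vanishing of `v₀` and, on the hyperplane, that of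
`v₁² + ⋯ + vₙ²` is invariant. -/

open Matrix MulAction

section IsometryGroup

lemma exists_apply_ne_zero_and_apply_ne_zero {R M N : Type*} [Semiring R] [AddCommMonoid M]
    [Module R M] [AddCommMonoid N] [Module R N] {f g : M →ₗ[R] N} (hf : f ≠ 0) (hg : g ≠ 0) :
    ∃ w, f w ≠ 0 ∧ g w ≠ 0 := by
  obtain ⟨a, ha⟩ := DFunLike.ne_iff.mp hf
  obtain ⟨b, hb⟩ := DFunLike.ne_iff.mp hg
  rw [LinearMap.zero_apply] at ha hb
  by_cases hga : g a = 0
  · by_cases hfb : f b = 0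
    · exact ⟨a + b, by rwa [map_add, hfb, add_zero], by rwa [map_add, hga, zero_add]⟩
    · exact ⟨b, hfb, hb⟩
  · exact ⟨a, ha, hga⟩

/-- The group of isometries of a bilinear form. -/
def isometryGroup {R M : Type*} [CommRing R] [AddCommGroup M] [Module R M]
    (B : LinearMap.BilinForm R M) : Subgroup (M ≃ₗ[R] M) where
  carrier := {f | B.IsOrthogonal f}
  mul_mem' hf hg x y := (hf _ _).trans (hg x y)
  one_mem' _ _ := rfl
  inv_mem' {f} hf x y := by
    simpa only [LinearEquiv.coe_inv, LinearEquiv.apply_symm_apply] using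
      (hf (f.symm x) (f.symm y)).symm

lemma mem_orbit_isometryGroup_iff {R M : Type*} [CommRing R] [AddCommGroup M] [Module R M]
    {B : LinearMap.BilinForm R M} {x y : M} :
    y ∈ orbit (isometryGroup B) x ↔ ∃ f : M ≃ₗ[R] M, B.IsOrthogonal f ∧ f x = y :=
  ⟨fun ⟨f, hf⟩ => ⟨f, f.2, hf⟩, fun ⟨f, hf, hfx⟩ => ⟨⟨f, hf⟩, hfx⟩⟩

variable {K V : Type*} [Field K] [AddCommGroup V] [Module K V]
  {B : LinearMap.BilinForm K V} {x y : V}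

lemma mem_orbit_isometryGroup_of_apply_sub_ne_zero (hB : LinearMap.IsSymm B)
    (hxy : B x x = B y y) (hsub : B (x - y) (x - y) ≠ 0) : y ∈ orbit (isometryGroup B) x := by
  have hr : LinearMap.IsReflective B (x - y) :=
    ⟨.of_ne_zero hsub, fun _ => hsub.isUnit.dvd⟩
  have hcoroot : hr.coroot B x = 1 := by
    have hsymm : B y x = B x y := hB.eq y x
    apply mul_left_cancel₀ hsub
    rw [LinearMap.IsReflective.apply_self_mul_coroot_apply]
    simp only [map_sub, LinearMap.sub_apply]
    linear_combination hxy - hsymm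
  refine mem_orbit_isometryGroup_iff.mpr ⟨_, hr.isOrthogonal_reflection B hB, ?_⟩
  rw [Module.reflection_apply, hcoroot, one_smul, sub_sub_cancel]

lemma neg_mem_orbit_isometryGroup (h : y ∈ orbit (isometryGroup B) x) :
    -y ∈ orbit (isometryGroup B) x := by
  obtain ⟨f, hf, rfl⟩ := mem_orbit_isometryGroup_iff.mp h
  exact mem_orbit_isometryGroup_iff.mpr ⟨f.trans (.neg K), by simpa [LinearMap.IsOrthogonal], rfl⟩

variable [NeZero (2 : K)]

lemma mem_orbit_isometryGroup_of_isotropic_of_apply_ne_zero (hB : LinearMap.IsSymm B)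
    (hx : B x x = 0) (hy : B y y = 0) (hxy : B x y ≠ 0) : y ∈ orbit (isometryGroup B) x := by
  refine mem_orbit_isometryGroup_of_apply_sub_ne_zero hB (hx.trans hy.symm) ?_
  have hsub : B (x - y) (x - y) = -(2 * B x y) := by
    have hsymm : B y x = B x y := hB.eq y x
    simp only [map_sub, LinearMap.sub_apply]
    linear_combination hx + hy - hsymm
  rw [hsub]
  exact neg_ne_zero.mpr (mul_ne_zero two_ne_zero hxy)

lemma exists_isotropic_apply_ne_zero (hB : LinearMap.IsSymm B) (hx : B x ≠ 0) (hy : B y ≠ 0)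
    (hxx : B x x = 0) (hxy : B x y = 0) : ∃ z, B z z = 0 ∧ B x z ≠ 0 ∧ B z y ≠ 0 := by
  obtain ⟨w, hxw, hyw⟩ := exists_apply_ne_zero_and_apply_ne_zero hx hy
  have hwx : B w x = B x w := hB.eq w x
  have hwy : B w y = B y w := hB.eq w y
  -- The line through `w` in the direction of `x` meets the null cone.
  refine ⟨w - (B w w / (2 * B x w)) • x, ?_, ?_, ?_⟩
  · simp only [map_sub, map_smul, LinearMap.sub_apply, LinearMap.smul_apply, smul_eq_mul, hxx, hwx]
    field_simp
    ring
  · simpa [hxx] using hxw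
  · simpa [hxy, hwy] using hyw

lemma mem_orbit_isometryGroup_of_isotropic (hB : LinearMap.IsSymm B) (hx : B x ≠ 0) (hy : B y ≠ 0)
    (hxx : B x x = 0) (hyy : B y y = 0) : y ∈ orbit (isometryGroup B) x := by
  by_cases hxy : B x y = 0
  · obtain ⟨z, hzz, hxz, hzy⟩ := exists_isotropic_apply_ne_zero hB hx hy hxx hxy
    exact (orbitRel _ V).trans
      (mem_orbit_isometryGroup_of_isotropic_of_apply_ne_zero hB hzz hyy hzy)
      (mem_orbit_isometryGroup_of_isotropic_of_apply_ne_zero hB hxx hzz hxz)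
  · exact mem_orbit_isometryGroup_of_isotropic_of_apply_ne_zero hB hxx hyy hxy

theorem mem_orbit_isometryGroup_of_apply_self_eq (hB : LinearMap.IsSymm B) (hx : B x ≠ 0)
    (hy : B y ≠ 0) (hxy : B x x = B y y) : y ∈ orbit (isometryGroup B) x := by
  by_cases hsub : B (x - y) (x - y) = 0
  · by_cases hadd : B (x - -y) (x - -y) = 0
    · have hxx : B x x = 0 := by
        have h4 : 2 * 2 * B x x = 0 := by
          simp only [map_sub, map_neg, LinearMap.sub_apply, LinearMap.neg_apply] at hsub hadd
          linear_combination hsub + hadd + 2 * hxy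
        simpa [two_ne_zero] using h4
      exact mem_orbit_isometryGroup_of_isotropic hB hx hy hxx (hxy ▸ hxx)
    · have hneg : -y ∈ orbit (isometryGroup B) x :=
        mem_orbit_isometryGroup_of_apply_sub_ne_zero hB (by simpa using hxy) hadd
      simpa using neg_mem_orbit_isometryGroup hneg
  · exact mem_orbit_isometryGroup_of_apply_sub_ne_zero hB hxy hsub

end IsometryGroup

section Similitude

variable {k m : Type*} [Field k] [Fintype m]

lemma exists_dotProduct_self_eq_smul (hk : ∀ a : k, IsSumSq a → IsSquare a) {x y : m → k}
    (hxy : x ⬝ᵥ x = 0 ↔ y ⬝ᵥ y = 0) : ∃ c : k, c ≠ 0 ∧ x ⬝ᵥ x = (c • y) ⬝ᵥ (c • y) := by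
  by_cases hx : x ⬝ᵥ x = 0
  · exact ⟨1, one_ne_zero, by rw [one_smul, hx, hxy.mp hx]⟩
  · obtain ⟨r, hr⟩ := hk _ (IsSumSq.sum_mul_self Finset.univ x)
    obtain ⟨s, hs⟩ := hk _ (IsSumSq.sum_mul_self Finset.univ y)
    change x ⬝ᵥ x = r * r at hr
    change y ⬝ᵥ y = s * s at hs
    have hr0 : r ≠ 0 := fun h => hx (by rw [hr, h, mul_zero])
    have hs0 : s ≠ 0 := fun h => hx (hxy.mpr (by rw [hs, h, mul_zero]))
    refine ⟨r / s, div_ne_zero hr0 hs0, ?_⟩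
    rw [smul_dotProduct, dotProduct_smul, hr, hs, smul_eq_mul, smul_eq_mul]
    field_simp

variable [DecidableEq m]

lemma exists_mem_orthogonalGroup_mulVec_eq [NeZero (2 : k)] {x y : m → k} (hx : x ≠ 0)
    (hy : y ≠ 0) (hxy : x ⬝ᵥ x = y ⬝ᵥ y) : ∃ U ∈ orthogonalGroup m k, U *ᵥ x = y := by
  let B : LinearMap.BilinForm k (m → k) := dotProductBilin k k
  have hB : LinearMap.IsSymm B := ⟨fun u v => dotProduct_comm u v⟩
  have hne {u : m → k} (hu : u ≠ 0) : B u ≠ 0 := fun h =>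
    hu (dotProduct_eq_zero u fun v => LinearMap.congr_fun h v)
  obtain ⟨f, hf, rfl⟩ := mem_orbit_isometryGroup_iff.mp <|
    mem_orbit_isometryGroup_of_apply_self_eq hB (hne hx) (hne hy) hxy
  refine ⟨LinearMap.toMatrix' f.toLinearMap, (mem_orthogonalGroup_iff' m k).mpr ?_,
    LinearMap.toMatrix'_mulVec _ _⟩
  ext i j
  have hij : f (Pi.single i 1) ⬝ᵥ f (Pi.single j 1) = Pi.single i 1 ⬝ᵥ Pi.single j 1 := hf _ _
  simpa [mul_apply, LinearMap.toMatrix'_apply, dotProduct, one_apply, Pi.single_apply,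
    eq_comm] using hij

/-- Matrices of similitudes of the dot product: those multiplying it by a nonzero scalar. This is
the condition that `memG` puts on the lower-right block. -/
def IsSimilitude (S : Matrix m m k) : Prop :=
  ∃ c : k, c ≠ 0 ∧ Sᵀ * S = c • 1

lemma IsSimilitude.smul {S : Matrix m m k} (hS : IsSimilitude S) {c : k} (hc : c ≠ 0) :
    IsSimilitude (c • S) := by
  obtain ⟨d, hd, hSd⟩ := hS
  refine ⟨c * (c * d), mul_ne_zero hc (mul_ne_zero hc hd), ?_⟩
  rw [transpose_smul, smul_mul_smul_comm, hSd, smul_smul, mul_assoc]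

lemma isSimilitude_of_mem_orthogonalGroup {U : Matrix m m k} (hU : U ∈ orthogonalGroup m k) :
    IsSimilitude U :=
  ⟨1, one_ne_zero, by rw [one_smul, (mem_orthogonalGroup_iff' m k).mp hU]⟩

lemma IsSimilitude.isUnit_det {S : Matrix m m k} (hS : IsSimilitude S) : IsUnit S.det := by
  obtain ⟨c, hc, hSc⟩ := hS
  refine isUnit_det_of_left_inverse (B := c⁻¹ • Sᵀ) ?_
  rw [smul_mul_assoc, hSc, inv_smul_smul₀ hc]

lemma IsSimilitude.dotProduct_mulVec_self_eq_zero_iff {S : Matrix m m k} (hS : IsSimilitude S)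
    (x : m → k) : S *ᵥ x ⬝ᵥ S *ᵥ x = 0 ↔ x ⬝ᵥ x = 0 := by
  obtain ⟨c, hc, hSc⟩ := hS
  have hdot : S *ᵥ x ⬝ᵥ S *ᵥ x = c * (x ⬝ᵥ x) := by
    rw [dotProduct_mulVec, ← mulVec_transpose, mulVec_mulVec, hSc, smul_mulVec, one_mulVec,
      smul_dotProduct, smul_eq_mul]
  rw [hdot, mul_eq_zero_iff_left hc]

theorem exists_isSimilitude_mulVec_eq [NeZero (2 : k)] (hk : ∀ a : k, IsSumSq a → IsSquare a)
    {x y : m → k} (hx : x ≠ 0) (hy : y ≠ 0) (hxy : x ⬝ᵥ x = 0 ↔ y ⬝ᵥ y = 0) :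
    ∃ S : Matrix m m k, IsSimilitude S ∧ S *ᵥ x = y := by
  obtain ⟨c, hc, hcy⟩ := exists_dotProduct_self_eq_smul hk hxy
  obtain ⟨U, hU, hUx⟩ := exists_mem_orthogonalGroup_mulVec_eq hx (smul_ne_zero hc hy) hcy
  refine ⟨c⁻¹ • U, (isSimilitude_of_mem_orthogonalGroup hU).smul (inv_ne_zero hc), ?_⟩
  rw [smul_mulVec, hUx, inv_smul_smul₀ hc]

end Similitude

section Coordinates

lemma tail_ne_zero {R : Type*} [Zero R] {n : ℕ} {v : Fin (n + 1) → R} (hv : v ≠ 0)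
    (h0 : v 0 = 0) : Fin.tail v ≠ 0 := by
  contrapose! hv
  ext i
  cases i using Fin.cases with
  | zero => exact h0
  | succ i => exact congrFun hv i

lemma sum_ite_one_le_sq_eq_tail_dotProduct_tail {R : Type*} [Semiring R] {n : ℕ}
    (v : Fin (n + 1) → R) :
    (∑ i : Fin (n + 1), if 1 ≤ (i : ℕ) then v i ^ 2 else 0) = Fin.tail v ⬝ᵥ Fin.tail v := by
  simp [Fin.sum_univ_succ, dotProduct, Fin.tail, sq]

variable {R : Type*} {n : ℕ}

/-- The block lower triangular matrix with diagonal blocks `a`, `S` and lower-left column `u`; the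
elements of `G` are of this form. -/
def lowerBlock [Zero R] (a : R) (u : Fin n → R) (S : Matrix (Fin n) (Fin n) R) :
    Matrix (Fin (n + 1)) (Fin (n + 1)) R :=
  Matrix.of (Fin.cons (Fin.cons a 0) fun i => Fin.cons (u i) (S i))

lemma lowerBlock_mulVec [CommSemiring R] (a : R) (u : Fin n → R)
    (S : Matrix (Fin n) (Fin n) R) (v : Fin (n + 1) → R) :
    lowerBlock a u S *ᵥ v = Fin.cons (a * v 0) (v 0 • u + S *ᵥ Fin.tail v) := by
  ext i
  cases i using Fin.cases <;>
    simp [lowerBlock, mulVec, dotProduct, Fin.sum_univ_succ, Fin.tail, mul_comm]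

lemma det_lowerBlock [CommRing R] (a : R) (u : Fin n → R) (S : Matrix (Fin n) (Fin n) R) :
    (lowerBlock a u S).det = a * S.det := by
  have hminor : (lowerBlock a u S).submatrix Fin.succ Fin.succ = S := rfl
  rw [det_succ_row_zero, Fin.sum_univ_succ]
  simp only [Fin.succAbove_zero, hminor]
  simp [lowerBlock]

end Coordinates

section Orbits

variable {k : Type*} [Field k] {n : ℕ}

lemma memG_iff_exists_lowerBlock {A : Matrix (Fin (n + 1)) (Fin (n + 1)) k} :
    memG A ↔ ∃ a : k, a ≠ 0 ∧ ∃ u S, IsSimilitude S ∧ A = lowerBlock a u S := by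
  constructor
  · rintro ⟨-, ha, hrow, hS⟩
    refine ⟨A 0 0, ha, fun i => A i.succ 0, _, hS, ?_⟩
    ext i j
    cases i using Fin.cases <;> cases j using Fin.cases <;> simp [lowerBlock, hrow]
  · rintro ⟨a, ha, u, S, hS, rfl⟩
    refine ⟨?_, ha, fun j hj => ?_, hS⟩
    · rw [isUnit_iff_isUnit_det, det_lowerBlock]
      exact ha.isUnit.mul hS.isUnit_det
    · obtain ⟨i, rfl⟩ := Fin.exists_succ_eq.mpr hj
      rfl

lemma memG.smul {A : Matrix (Fin (n + 1)) (Fin (n + 1)) k} (hA : memG A) {c : k} (hc : c ≠ 0) :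
    memG (c • A) := by
  obtain ⟨hunit, ha, hrow, hS⟩ := hA
  refine ⟨hunit.smul (Units.mk0 c hc), mul_ne_zero hc ha, fun j hj => ?_, IsSimilitude.smul hS hc⟩
  rw [Matrix.smul_apply, hrow j hj, smul_zero]

variable {p p' : Projectivization k (Fin (n + 1) → k)}

lemma mem_GOrbit_iff_exists_mulVec_rep :
    p' ∈ GOrbit p ↔ ∃ A : Matrix (Fin (n + 1)) (Fin (n + 1)) k, memG A ∧ A *ᵥ p.rep = p'.rep := by
  have hmap (A : Matrix (Fin (n + 1)) (Fin (n + 1)) k) (hA : Function.Injective A.mulVecLin) :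
      Projectivization.map A.mulVecLin hA p = p' ↔ ∃ c : kˣ, c • p'.rep = A *ᵥ p.rep := by
    conv_lhs =>
      rw [← p.mk_rep, ← p'.mk_rep, Projectivization.map_mk, Projectivization.mk_eq_mk_iff]
    rfl
  constructor
  · rintro ⟨A, hA, hinj, h⟩
    obtain ⟨c, hc⟩ := (hmap A hinj).mp h
    refine ⟨(c⁻¹ : k) • A, hA.smul (inv_ne_zero c.ne_zero), ?_⟩
    rw [smul_mulVec, ← hc, Units.smul_def, inv_smul_smul₀ c.ne_zero]
  · rintro ⟨A, hA, h⟩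
    have hinj : Function.Injective A.mulVecLin := mulVec_injective_of_isUnit hA.1
    exact ⟨A, hA, hinj, (hmap A hinj).mpr ⟨1, by rw [one_smul, h]⟩⟩

lemma mem_GOrbit_iff_exists_rep_eq :
    p' ∈ GOrbit p ↔ ∃ a : k, a ≠ 0 ∧ ∃ u S, IsSimilitude S ∧
      p'.rep 0 = a * p.rep 0 ∧ Fin.tail p'.rep = p.rep 0 • u + S *ᵥ Fin.tail p.rep := by
  have hrep (a : k) (u : Fin n → k) (S : Matrix (Fin n) (Fin n) k) :
      lowerBlock a u S *ᵥ p.rep = p'.rep ↔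
        p'.rep 0 = a * p.rep 0 ∧ Fin.tail p'.rep = p.rep 0 • u + S *ᵥ Fin.tail p.rep := by
    rw [lowerBlock_mulVec, eq_comm, ← Fin.cons_self_tail p'.rep, Fin.cons_inj]
    rfl
  simp only [mem_GOrbit_iff_exists_mulVec_rep, memG_iff_exists_lowerBlock, ← hrep]
  constructor
  · rintro ⟨_, ⟨a, ha, u, S, hS, rfl⟩, h⟩
    exact ⟨a, ha, u, S, hS, h⟩
  · rintro ⟨a, ha, u, S, hS, h⟩
    exact ⟨_, ⟨a, ha, u, S, hS, rfl⟩, h⟩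

lemma mem_GOrbit_iff_of_rep_zero_ne_zero (hp : p.rep 0 ≠ 0) :
    p' ∈ GOrbit p ↔ p'.rep 0 ≠ 0 := by
  rw [mem_GOrbit_iff_exists_rep_eq]
  constructor
  · rintro ⟨a, ha, -, -, -, h0, -⟩
    rw [h0]
    exact mul_ne_zero ha hp
  · intro hp'
    refine ⟨p'.rep 0 / p.rep 0, div_ne_zero hp' hp,
      (p.rep 0)⁻¹ • (Fin.tail p'.rep - Fin.tail p.rep), 1,
      isSimilitude_of_mem_orthogonalGroup (one_mem _), (div_mul_cancel₀ _ hp).symm, ?_⟩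
    rw [smul_inv_smul₀ hp, one_mulVec, sub_add_cancel]

lemma mem_GOrbit_iff_of_rep_zero_eq_zero [NeZero (2 : k)] (hk : ∀ a : k, IsSumSq a → IsSquare a)
    (hp : p.rep 0 = 0) :
    p' ∈ GOrbit p ↔ p'.rep 0 = 0 ∧
      (Fin.tail p.rep ⬝ᵥ Fin.tail p.rep = 0 ↔ Fin.tail p'.rep ⬝ᵥ Fin.tail p'.rep = 0) := by
  rw [mem_GOrbit_iff_exists_rep_eq]
  simp only [hp, mul_zero, zero_smul, zero_add]
  constructor
  · rintro ⟨-, -, -, S, hS, hp', hSp⟩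
    rw [hSp]
    exact ⟨hp', (hS.dotProduct_mulVec_self_eq_zero_iff _).symm⟩
  · rintro ⟨hp', hiso⟩
    obtain ⟨S, hS, hSp⟩ := exists_isSimilitude_mulVec_eq hk (tail_ne_zero p.rep_nonzero hp)
      (tail_ne_zero p'.rep_nonzero hp') hiso
    exact ⟨1, one_ne_zero, 0, S, hS, hp', hSp.symm⟩

end Orbits

theorem stmt10_general (k : Type*) [Field k] [NeZero (2 : k)]
    (hk : ∀ a : k, IsSumSq a → IsSquare a) (n : ℕ)
    (C Hyp : Set (Projectivization k (Fin (n + 1) → k)))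
    (hC : C = {p | p.rep 0 = 0 ∧
      (∑ i : Fin (n + 1), if 1 ≤ (i : ℕ) then p.rep i ^ 2 else 0) = 0})
    (hHyp : Hyp = {p | p.rep 0 = 0}) :
    (∀ p ∈ C, GOrbit p = C) ∧
    (∀ p ∈ Hyp \ C, GOrbit p = Hyp \ C) ∧
    (∀ p ∈ {p : Projectivization k (Fin (n + 1) → k) | p.rep 0 ≠ 0},
      GOrbit p = {p : Projectivization k (Fin (n + 1) → k) | p.rep 0 ≠ 0}) ∧
    C ∪ (Hyp \ C) ∪ {p : Projectivization k (Fin (n + 1) → k) | p.rep 0 ≠ 0} = Set.univ := by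
  simp only [sum_ite_one_le_sq_eq_tail_dotProduct_tail] at hC
  subst hC hHyp
  refine ⟨?_, ?_, ?_, ?_⟩
  · rintro p ⟨hp, hpC⟩
    ext p'
    simp [mem_GOrbit_iff_of_rep_zero_eq_zero hk hp, hpC]
  · rintro p ⟨hp, hpC⟩
    have hiso : Fin.tail p.rep ⬝ᵥ Fin.tail p.rep ≠ 0 := fun h => hpC ⟨hp, h⟩
    ext p'
    simp +contextual [mem_GOrbit_iff_of_rep_zero_eq_zero hk hp, hiso]
  · intro p hp
    ext p'
    exact mem_GOrbit_iff_of_rep_zero_ne_zero hp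
  · ext p
    simp only [Set.mem_union, Set.mem_sdiff, Set.mem_ofPred_eq, Set.mem_univ, iff_true]
    tauto

/-- The orbits of `G = Aut(ℙⁿ; Q_{n−2})` on `ℙⁿ` are exactly: the quadric
`C = {v₀ = 0, v₁² + ⋯ + vₙ² = 0}`, the hyperplane `{v₀ = 0}` minus `C`, and the open set
`{v₀ ≠ 0}`. -/
theorem stmt10 (k : Type*) [Field k] [IsAlgClosed k] [CharZero k]
    (n : ℕ) (hn : 3 ≤ n)
    (C Hyp : Set (Projectivization k (Fin (n + 1) → k)))
    (hC : C = {p | p.rep 0 = 0 ∧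
      (∑ i : Fin (n + 1), if 1 ≤ (i : ℕ) then p.rep i ^ 2 else 0) = 0})
    (hHyp : Hyp = {p | p.rep 0 = 0}) :
    (∀ p ∈ C, GOrbit p = C) ∧
    (∀ p ∈ Hyp \ C, GOrbit p = Hyp \ C) ∧
    (∀ p ∈ {p : Projectivization k (Fin (n + 1) → k) | p.rep 0 ≠ 0},
      GOrbit p = {p : Projectivization k (Fin (n + 1) → k) | p.rep 0 ≠ 0}) ∧
    C ∪ (Hyp \ C) ∪ {p : Projectivization k (Fin (n + 1) → k) | p.rep 0 ≠ 0} = Set.univ := by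
  exact stmt10_general k (fun a _ => IsAlgClosed.exists_eq_mul_self a) n C Hyp hC hHyp
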